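/- Let Γ be a generalised hexagon of finite order (s,t) with s > 1 and t > 1, and let S be a set of s+1 points of Γ such that no point of Γ is opposite every member of S. Suppose p0, p1 ∈ S are distinct and non-collinear, x is a point collinear to both p0 and p1, and x ∉ S. Then every line of Γ through x contains at least one point of S. -/

import Mathlib

/-- An incidence structure of points and lines, each line being a set of points. -/
structure GenHexagon where
  Point : Type
  Line : Type
  pts : Line → Set Point

namespace GenHexagon

variable (Γ : GenHexagon)

/-- Adjacency of the bipartite incidence graph on the disjoint union of points and lines:
a point is adjacent to a line iff the point lies on the line. -/
def incAdj : Γ.Point ⊕ Γ.Line → Γ.Point ⊕ Γ.Line → Prop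
  | Sum.inl x, Sum.inr L => x ∈ Γ.pts L
  | Sum.inr L, Sum.inl x => x ∈ Γ.pts L
  | _, _ => False

/-- The bipartite incidence graph. -/
def incGraph : SimpleGraph (Γ.Point ⊕ Γ.Line) where
  Adj := Γ.incAdj
  symm := ⟨by rintro (x | L) (y | M) h <;> simp_all [incAdj]⟩
  loopless := ⟨by rintro (x | L) h <;> simp_all [incAdj]⟩

/-- `Γ` is a generalised hexagon: its incidence graph has diameter `6` and girth `12`. -/
def IsGenHexagon : Prop :=
  Γ.incGraph.ediam = 6 ∧ Γ.incGraph.egirth = 12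

/-- Two points are collinear if they are distinct and some line contains both. -/
def Collinear (x y : Γ.Point) : Prop :=
  x ≠ y ∧ ∃ L, x ∈ Γ.pts L ∧ y ∈ Γ.pts L

/-- Two points are special if they are distinct, non-collinear, and collinear
to a common point. -/
def Special (x y : Γ.Point) : Prop :=
  x ≠ y ∧ ¬ Γ.Collinear x y ∧ ∃ z, Γ.Collinear x z ∧ Γ.Collinear y z

/-- Two points are opposite if they are distinct, non-collinear and non-special. -/
def Opposite (x y : Γ.Point) : Prop :=
  x ≠ y ∧ ¬ Γ.Collinear x y ∧ ¬ Γ.Special x y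

/-- `Γ` has order `(s, t)`: every line contains exactly `s + 1` points and every
point lies on exactly `t + 1` lines. -/
def HasOrder (s t : ℕ) : Prop :=
  (∀ L, (Γ.pts L).encard = s + 1) ∧ (∀ x, {L | x ∈ Γ.pts L}.encard = t + 1)

/-- `Γ` is thick: every line contains at least `3` points and every point lies on
at least `3` lines. -/
def Thick : Prop :=
  (∀ L, 3 ≤ (Γ.pts L).encard) ∧ (∀ x, 3 ≤ {L | x ∈ Γ.pts L}.encard)

/-- A point is close to a line if it is collinear to exactly one point of that line. -/
def CloseTo (x : Γ.Point) (L : Γ.Line) : Prop :=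
  ∃! y, y ∈ Γ.pts L ∧ Γ.Collinear x y

/-- Two lines are opposite if they are disjoint and no point of one is collinear to
a point of the other. -/
def OppLines (L M : Γ.Line) : Prop :=
  (∀ x ∈ Γ.pts L, x ∉ Γ.pts M) ∧
  (∀ x ∈ Γ.pts L, ∀ y ∈ Γ.pts M, ¬ Γ.Collinear x y)

/-- The distance-3 trace `[L,M]₃` of two (opposite) lines: the set of points close to
both `L` and `M`. -/
def trace3 (L M : Γ.Line) : Set Γ.Point :=
  {x | Γ.CloseTo x L ∧ Γ.CloseTo x M}

/-- The distance-3 trace `[L,M]₃` is regular if `[N,M]₃ = [L,M]₃` for every line `N`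
opposite `M` such that `[N,M]₃` and `[L,M]₃` share at least two points. -/
def RegularTrace3 (L M : Γ.Line) : Prop :=
  ∀ N, Γ.OppLines N M → (Γ.trace3 N M ∩ Γ.trace3 L M).Nontrivial →
    Γ.trace3 N M = Γ.trace3 L M

/-- A hyperbolic line: a set `H` of pairwise special points, all collinear to a common
point `p`, such that for every point `q` opposite `p` to which at least two points of `H`
are special, the set of points special to `q` and collinear to `p` equals `H`. -/
def IsHyperbolicLine (H : Set Γ.Point) : Prop :=
  (∀ x ∈ H, ∀ y ∈ H, x ≠ y → Γ.Special x y) ∧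
  ∃ p, (∀ x ∈ H, Γ.Collinear x p) ∧
    ∀ q, Γ.Opposite q p → {x ∈ H | Γ.Special q x}.Nontrivial →
      {x | Γ.Special q x ∧ Γ.Collinear x p} = H

/-- A round-up triple: no point of `Γ` is opposite exactly one of `x₁, x₂, x₃`. -/
def RoundUpTriple (x₁ x₂ x₃ : Γ.Point) : Prop :=
  ∀ y : Γ.Point,
    ¬ ((Γ.Opposite y x₁ ∧ ¬ Γ.Opposite y x₂ ∧ ¬ Γ.Opposite y x₃) ∨
       (¬ Γ.Opposite y x₁ ∧ Γ.Opposite y x₂ ∧ ¬ Γ.Opposite y x₃) ∨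
       (¬ Γ.Opposite y x₁ ∧ ¬ Γ.Opposite y x₂ ∧ Γ.Opposite y x₃))

/-- A geometric line: a set `T` of points such that each point of `Γ` is either opposite
no member of `T`, or non-opposite to exactly one member of `T`. -/
def IsGeometricLine (T : Set Γ.Point) : Prop :=
  ∀ y : Γ.Point, (∀ x ∈ T, ¬ Γ.Opposite y x) ∨ (∃! x, x ∈ T ∧ ¬ Γ.Opposite y x)

end GenHexagon

/-!
Suppose a line `L` through `x` misses `S`. The points `p₀` and `p₁` both project onto `L` at `x`,
so the projections of the at most `s + 1` points of `S` onto `L` do not exhaust `L`: some `y ∈ L` is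
the projection of no point of `S`. Any line `M ≠ L` through `y` is then at distance five in the
incidence graph from every point of `S`, and `p₀` and `p₁`, at distance three from `L`, both project
onto `M` at `y`. The same count on `M` yields `z ∈ M` that is the projection of no point of `S`; it
is at distance six from, hence opposite, every point of `S`.
-/

section Graph

open SimpleGraph

variable {V : Type*} {G : SimpleGraph V} {u v w w' : V}

theorem exists_adj_dist_lt (huv : G.Reachable u v) (hne : u ≠ v) :
    ∃ w, G.Adj w v ∧ G.dist u w < G.dist u v := by
  obtain ⟨p, hp⟩ := huv.exists_walk_length_eq_dist
  have hnil : ¬ p.Nil := p.not_nil_of_ne hne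
  refine ⟨p.penultimate, p.adj_penultimate hnil, ?_⟩
  have hlen := p.length_dropLast_add_one hnil
  have hle := dist_le p.dropLast
  omega

theorem exists_isPath_concat_length_eq_dist (huv : G.Reachable u v) (hw : G.Adj w v)
    (hd : G.dist u w < G.dist u v) :
    ∃ p : G.Walk u w, (p.concat hw).IsPath ∧ (p.concat hw).length = G.dist u v := by
  obtain ⟨p, hp⟩ := (huv.trans hw.symm.reachable).exists_walk_length_eq_dist
  have hle := dist_le (p.concat hw)
  have hlen : (p.concat hw).length = G.dist u v := by
    rw [Walk.length_concat] at hle ⊢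
    omega
  exact ⟨p, (p.concat hw).isPath_of_length_eq_dist hlen, hlen⟩

theorem eq_of_adj_of_dist_lt (huv : G.Reachable u v)
    (hgirth : ((2 * G.dist u v : ℕ) : ℕ∞) < G.egirth) (hw : G.Adj w v) (hw' : G.Adj w' v)
    (hd : G.dist u w < G.dist u v) (hd' : G.dist u w' < G.dist u v) : w = w' := by
  obtain ⟨p, hp, hpl⟩ := exists_isPath_concat_length_eq_dist huv hw hd
  obtain ⟨q, hq, hql⟩ := exists_isPath_concat_length_eq_dist huv hw' hd'
  by_contra hne
  have hpq : p.concat hw ≠ q.concat hw' := fun h ↦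
    hne (by simpa using congrArg Walk.penultimate h)
  -- Distinct neighbours give distinct geodesics, whose union contains a short cycle.
  obtain ⟨_, _, _, c, hc, hcl⟩ := hp.exists_isCycle_length_le_add_of_ne hq hpq
  have hle : (c.length : ℕ∞) ≤ (2 * G.dist u v : ℕ) := by
    rw [Nat.cast_le]
    omega
  exact (hgirth.trans_le (egirth_le_length hc)).not_ge hle

theorem even_dist_iff_of_coloring (c : G.Coloring Bool) (huv : G.Reachable u v) :
    Even (G.dist u v) ↔ (c u ↔ c v) := by
  obtain ⟨p, hp⟩ := huv.exists_walk_length_eq_dist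
  rw [← hp, c.even_length_iff_congr p]

end Graph

theorem exists_mem_forall_ne_of_not_injOn {α β : Type*} {S : Set α} {T : Set β} {f : α → β}
    (hfin : S.Finite) (hcard : S.encard ≤ T.encard) (hf : ¬ Set.InjOn f S) :
    ∃ y ∈ T, ∀ p ∈ S, y ≠ f p := by
  by_contra! hsurj
  have hsub : T ⊆ f '' S := fun y hy ↦
    let ⟨p, hp, hyp⟩ := hsurj y hy
    ⟨p, hp, hyp.symm⟩
  exact hf (hfin.injOn_of_encard_image_eq
    ((Set.encard_image_le f S).antisymm (hcard.trans (Set.encard_le_encard hsub))))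

namespace GenHexagon

variable {Γ : GenHexagon} {p x y : Γ.Point} {L M : Γ.Line} {S : Set Γ.Point}

/-- The two-colouring of the incidence graph in which the points are the vertices coloured
`true`. -/
def incColoring (Γ : GenHexagon) : Γ.incGraph.Coloring Bool :=
  SimpleGraph.Coloring.mk Sum.isLeft (by rintro (x | L) (y | M) h <;> simp_all [incGraph, incAdj])

/-- The distance between two points in the incidence graph; it is twice the distance in the
collinearity graph. -/
noncomputable def pointDist (p q : Γ.Point) : ℕ :=
  Γ.incGraph.dist (Sum.inl p) (Sum.inl q)

/-- The distance from a point to a line in the incidence graph; it is one exactly when the point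
lies on the line. -/
noncomputable def lineDist (p : Γ.Point) (L : Γ.Line) : ℕ :=
  Γ.incGraph.dist (Sum.inl p) (Sum.inr L)

theorem incGraph_adj_inl_inr : Γ.incGraph.Adj (Sum.inl p) (Sum.inr L) ↔ p ∈ Γ.pts L := Iff.rfl

theorem pointDist_self (p : Γ.Point) : pointDist p p = 0 := SimpleGraph.dist_self

theorem pointDist_comm (p q : Γ.Point) : pointDist p q = pointDist q p := SimpleGraph.dist_comm

theorem lineDist_eq_one_iff : lineDist p L = 1 ↔ p ∈ Γ.pts L :=
  SimpleGraph.dist_eq_one_iff_adj.trans incGraph_adj_inl_inr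

theorem Collinear.symm (h : Γ.Collinear x y) : Γ.Collinear y x :=
  ⟨h.1.symm, let ⟨L, hx, hy⟩ := h.2; ⟨L, hy, hx⟩⟩

theorem Collinear.pointDist_le_two (h : Γ.Collinear x y) : pointDist x y ≤ 2 := by
  obtain ⟨-, L, hx, hy⟩ := h
  exact SimpleGraph.dist_le (.cons (incGraph_adj_inl_inr.2 hx)
    (.cons (incGraph_adj_inl_inr.2 hy).symm .nil))

section Connected

variable (hconn : Γ.incGraph.Connected)

include hconn

theorem pointDist_triangle (x y z : Γ.Point) : pointDist x z ≤ pointDist x y + pointDist y z :=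
  hconn.dist_triangle

theorem even_pointDist (p q : Γ.Point) : Even (pointDist p q) :=
  (even_dist_iff_of_coloring Γ.incColoring (hconn _ _)).2 Iff.rfl

theorem odd_lineDist (p : Γ.Point) (L : Γ.Line) : Odd (lineDist p L) := by
  rw [← Nat.not_even_iff_odd, lineDist, even_dist_iff_of_coloring Γ.incColoring (hconn _ _)]
  exact fun h ↦ Bool.false_ne_true (h.1 rfl)

theorem pointDist_add_one_eq_or_eq_add_one (p : Γ.Point) (hy : y ∈ Γ.pts L) :
    pointDist p y + 1 = lineDist p L ∨ pointDist p y = lineDist p L + 1 := by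
  have hdiff : lineDist p L = pointDist p y ∨ lineDist p L = pointDist p y + 1 ∨
      lineDist p L = pointDist p y - 1 := (incGraph_adj_inl_inr.2 hy).diff_dist_adj
  have heven := even_pointDist hconn p y
  have hodd := odd_lineDist hconn p L
  grind

theorem lineDist_eq_three_of_collinear (hx : x ∈ Γ.pts L) (hpx : Γ.Collinear p x)
    (hp : p ∉ Γ.pts L) : lineDist p L = 3 := by
  have hle := hpx.pointDist_le_two
  have hflag := pointDist_add_one_eq_or_eq_add_one hconn p hx
  have hne_one : lineDist p L ≠ 1 := mt lineDist_eq_one_iff.1 hp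
  obtain ⟨k, hk⟩ := odd_lineDist hconn p L
  omega

theorem opposite_of_pointDist_eq_six (h : pointDist x y = 6) : Γ.Opposite x y := by
  refine ⟨?_, fun hcol ↦ ?_, ?_⟩
  · rintro rfl
    simp [pointDist_self] at h
  · have := hcol.pointDist_le_two
    omega
  · rintro ⟨-, -, z, hxz, hyz⟩
    have hxz_le := hxz.pointDist_le_two
    have hzy_le := hyz.symm.pointDist_le_two
    have htri := pointDist_triangle hconn x z y
    omega

end Connected

namespace IsGenHexagon

variable (hΓ : Γ.IsGenHexagon)

include hΓ

theorem connected : Γ.incGraph.Connected := by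
  have : Nontrivial (Γ.Point ⊕ Γ.Line) :=
    SimpleGraph.nontrivial_of_ediam_ne_zero (by rw [hΓ.1]; decide)
  exact SimpleGraph.connected_of_ediam_ne_top (by rw [hΓ.1]; decide)

theorem lineDist_le_five (p : Γ.Point) (L : Γ.Line) : lineDist p L ≤ 5 := by
  have hle_six : lineDist p L ≤ 6 := by
    have hle : Γ.incGraph.edist (Sum.inl p) (Sum.inr L) ≤ 6 := hΓ.1 ▸ SimpleGraph.edist_le_ediam
    rw [← (hΓ.connected _ _).coe_dist_eq_edist] at hle
    exact_mod_cast hle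
  obtain ⟨k, hk⟩ := odd_lineDist hΓ.connected p L
  omega

theorem existsUnique_pointDist_lt (L : Γ.Line) (p : Γ.Point) :
    ∃! y, y ∈ Γ.pts L ∧ pointDist p y < lineDist p L := by
  obtain ⟨y | M, hadj, hd⟩ :=
    exists_adj_dist_lt (hΓ.connected (Sum.inl p) (Sum.inr L)) Sum.inl_ne_inr
  · have hgirth : ((2 * lineDist p L : ℕ) : ℕ∞) < Γ.incGraph.egirth := by
      have hle := hΓ.lineDist_le_five p L
      rw [hΓ.2]
      exact_mod_cast (by omega : 2 * lineDist p L < 12)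
    exact ⟨y, ⟨hadj, hd⟩, fun z hz ↦ Sum.inl_injective
      (eq_of_adj_of_dist_lt (hΓ.connected _ _) hgirth (incGraph_adj_inl_inr.2 hz.1) hadj hz.2 hd)⟩
  · exact hadj.elim

theorem eq_of_lineDist_lt (hL : y ∈ Γ.pts L) (hM : y ∈ Γ.pts M) (hy : pointDist p y < 6)
    (hdL : lineDist p L < pointDist p y) (hdM : lineDist p M < pointDist p y) : L = M := by
  have hgirth : ((2 * pointDist p y : ℕ) : ℕ∞) < Γ.incGraph.egirth := by
    rw [hΓ.2]
    exact_mod_cast (by omega : 2 * pointDist p y < 12)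
  exact Sum.inr_injective (eq_of_adj_of_dist_lt (hΓ.connected _ _) hgirth
    (incGraph_adj_inl_inr.2 hL).symm (incGraph_adj_inl_inr.2 hM).symm hdL hdM)

/-- The projection of the point `p` onto the line `L`: the unique point of `L` nearest to `p`. -/
noncomputable def proj (L : Γ.Line) (p : Γ.Point) : Γ.Point :=
  (hΓ.existsUnique_pointDist_lt L p).choose

theorem proj_eq_of_pointDist_lt (hy : y ∈ Γ.pts L) (hd : pointDist p y < lineDist p L) :
    hΓ.proj L p = y :=
  ((hΓ.existsUnique_pointDist_lt L p).choose_spec.2 y ⟨hy, hd⟩).symm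

theorem pointDist_eq_of_ne_proj (hy : y ∈ Γ.pts L) (hne : y ≠ hΓ.proj L p) :
    pointDist p y = lineDist p L + 1 :=
  (pointDist_add_one_eq_or_eq_add_one hΓ.connected p hy).resolve_left fun h ↦
    hne (hΓ.proj_eq_of_pointDist_lt hy (by omega)).symm

theorem proj_eq_of_collinear (hx : x ∈ Γ.pts L) (hpx : Γ.Collinear p x) (hp : p ∉ Γ.pts L) :
    hΓ.proj L p = x := by
  have hle := hpx.pointDist_le_two
  have hthree := lineDist_eq_three_of_collinear hΓ.connected hx hpx hp
  exact hΓ.proj_eq_of_pointDist_lt hx (by omega)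

theorem lineDist_eq_five (hyL : y ∈ Γ.pts L) (hyM : y ∈ Γ.pts M) (hML : M ≠ L)
    (hp : p ∉ Γ.pts L) (hy : pointDist p y = lineDist p L + 1) : lineDist p M = 5 := by
  have hne_one : lineDist p L ≠ 1 := mt lineDist_eq_one_iff.1 hp
  obtain ⟨k, hk⟩ := odd_lineDist hΓ.connected p L
  have hle := hΓ.lineDist_le_five p M
  have hflag := pointDist_add_one_eq_or_eq_add_one hΓ.connected p hyM
  by_contra hne
  exact hML (hΓ.eq_of_lineDist_lt (p := p) hyM hyL (by omega) (by omega) (by omega))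

theorem exists_mem_forall_pointDist_eq (hfin : S.Finite) (hcard : S.encard ≤ (Γ.pts L).encard)
    (hproj : ¬ Set.InjOn (hΓ.proj L) S) :
    ∃ y ∈ Γ.pts L, ∀ p ∈ S, pointDist p y = lineDist p L + 1 :=
  let ⟨y, hyL, hy⟩ := exists_mem_forall_ne_of_not_injOn hfin hcard hproj
  ⟨y, hyL, fun p hp ↦ hΓ.pointDist_eq_of_ne_proj hyL (hy p hp)⟩

end IsGenHexagon

end GenHexagon

open GenHexagon in
theorem claim1_lines_through_common_neighbour_general (Γ : GenHexagon) (hΓ : Γ.IsGenHexagon)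
    (hlines : ∀ y : Γ.Point, {M | y ∈ Γ.pts M}.Nontrivial)
    (S : Set Γ.Point) (hfin : S.Finite) (hcard : ∀ M, S.encard ≤ (Γ.pts M).encard)
    (hblock : ¬ ∃ y : Γ.Point, ∀ x ∈ S, Γ.Opposite y x)
    (p₀ p₁ : Γ.Point) (hp₀ : p₀ ∈ S) (hp₁ : p₁ ∈ S) (hne : p₀ ≠ p₁)
    (x : Γ.Point) (hx₀ : Γ.Collinear x p₀) (hx₁ : Γ.Collinear x p₁) :
    ∀ L, x ∈ Γ.pts L → ∃ p ∈ S, p ∈ Γ.pts L := by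
  intro L hxL
  by_contra! hL
  have exists_far {N : Γ.Line} {q : Γ.Point}
      (hq : ∀ p ∈ S, Γ.Collinear x p → hΓ.proj N p = q) :
      ∃ y ∈ Γ.pts N, ∀ p ∈ S, pointDist p y = lineDist p N + 1 :=
    hΓ.exists_mem_forall_pointDist_eq hfin (hcard N) fun hinj ↦
      hne (hinj hp₀ hp₁ ((hq p₀ hp₀ hx₀).trans (hq p₁ hp₁ hx₁).symm))
  obtain ⟨y, hyL, hy⟩ := exists_far fun p hp hxp ↦
    hΓ.proj_eq_of_collinear hxL hxp.symm (hL p hp)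
  obtain ⟨M, hyM, hML⟩ := (hlines y).exists_ne L
  have hM : ∀ p ∈ S, lineDist p M = 5 := fun p hp ↦
    hΓ.lineDist_eq_five hyL hyM hML (hL p hp) (hy p hp)
  obtain ⟨z, _, hz⟩ := exists_far fun p hp hxp ↦
    hΓ.proj_eq_of_pointDist_lt hyM (by
      rw [hy p hp, lineDist_eq_three_of_collinear hΓ.connected hxL hxp.symm (hL p hp), hM p hp]
      decide)
  refine hblock ⟨z, fun p hp ↦ opposite_of_pointDist_eq_six hΓ.connected ?_⟩
  rw [pointDist_comm, hz p hp, hM p hp]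

/-- Claim 1 in the proof: if `p₀, p₁ ∈ S` are distinct and non-collinear, `x ∉ S` is
collinear to both, then every line through `x` contains a point of `S`. -/
theorem claim1_lines_through_common_neighbour (Γ : GenHexagon) (hΓ : Γ.IsGenHexagon)
    (s t : ℕ) (hs : 1 < s) (ht : 1 < t) (hord : Γ.HasOrder s t)
    (S : Set Γ.Point) (hS : S.encard = s + 1)
    (hblock : ¬ ∃ y : Γ.Point, ∀ x ∈ S, Γ.Opposite y x)
    (p₀ p₁ : Γ.Point) (hp₀ : p₀ ∈ S) (hp₁ : p₁ ∈ S) (hne : p₀ ≠ p₁)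
    (hncol : ¬ Γ.Collinear p₀ p₁)
    (x : Γ.Point) (hx₀ : Γ.Collinear x p₀) (hx₁ : Γ.Collinear x p₁) (hxS : x ∉ S) :
    ∀ L, x ∈ Γ.pts L → ∃ p ∈ S, p ∈ Γ.pts L := by
  have hlines (y : Γ.Point) : {M | y ∈ Γ.pts M}.Nontrivial := by
    rw [← Set.one_lt_encard_iff_nontrivial, hord.2 y]
    exact_mod_cast ht.trans t.lt_succ_self
  exact claim1_lines_through_common_neighbour_general Γ hΓ hlines S (Set.finite_of_encard_eq_coe hS)
    (fun M ↦ (hS.trans (hord.1 M).symm).le) hblock p₀ p₁ hp₀ hp₁ hne x hx₀ hx₁
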